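/- Let H be a real Hilbert space, X a set, and Φ : X → H a feature map with kernel K_mis(x,y) = ⟨Φ(x), Φ(y)⟩ (a possibly misspecified kernel). Let the quadrature rule π_KQ be given by points x_1,…,x_n ∈ X with nonnegative weights w_1,…,w_n summing to 1, and let the empirical measure π̃ be given by points y_1,…,y_N ∈ X with nonnegative weights u_1,…,u_N summing to 1. Let f : X → ℝ be any function (not necessarily in the RKHS of K_mis), let g ∈ H, and set f̃(x) = ⟨g, Φ(x)⟩. If |f(x) − f̃(x)| ≤ ε for all x ∈ X, then | Σ_{i=1}^n w_i f(x_i) − Σ_{j=1}^N u_j f(y_j) | ≤ 2 ε + ‖g‖ · ‖ Σ_{i=1}^n w_i Φ(x_i) − Σ_{j=1}^N u_j Φ(y_j) ‖, where the last factor is the worst-case quadrature error of π_KQ against π̃ over the unit ball of the RKHS of K_mis. (In general, with signed weights, the factor 2 is replaced by Σ_i |w_i| + Σ_j |u_j|, the sum of the total variations of the two measures.) -/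

import Mathlib

open scoped RealInnerProductSpace

/-- Robustness against a misspecified RKHS.  With feature map `Φ`
(of the possibly misspecified kernel `K_mis`), quadrature rule `(w, x)` and empirical
measure `(u, y)` both with convex weights, any function `f` uniformly `ε`-close to an
RKHS function `f̃ = ⟪g, Φ(·)⟫` satisfies
`|∑ i, w i f(x i) − ∑ j, u j f(y j)| ≤ 2 ε + ‖g‖ ‖∑ i, w i Φ(x i) − ∑ j, u j Φ(y j)‖`. -/
theorem stmt_8
    {H : Type*} [NormedAddCommGroup H] [InnerProductSpace ℝ H]
    {X : Type*} (Φ : X → H)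
    {n N : ℕ} (x : Fin n → X) (w : Fin n → ℝ) (y : Fin N → X) (u : Fin N → ℝ)
    (hw : ∀ i, 0 ≤ w i) (hw1 : ∑ i, w i = 1)
    (hu : ∀ j, 0 ≤ u j) (hu1 : ∑ j, u j = 1)
    (f : X → ℝ) (g : H) (ε : ℝ)
    (hclose : ∀ z : X, |f z - ⟪g, Φ z⟫| ≤ ε) :
    |(∑ i, w i * f (x i)) - ∑ j, u j * f (y j)|
      ≤ 2 * ε + ‖g‖ * ‖(∑ i, w i • Φ (x i)) - ∑ j, u j • Φ (y j)‖ := by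
  have key : ∀ {m : ℕ} (p : Fin m → X) (v : Fin m → ℝ), (∀ i, 0 ≤ v i) → ∑ i, v i = 1 →
      |(∑ i, v i * f (p i)) - ⟪g, ∑ i, v i • Φ (p i)⟫| ≤ ε := by
    intro m p v hv hv1
    have e : (∑ i, v i * f (p i)) - ⟪g, ∑ i, v i • Φ (p i)⟫
        = ∑ i, v i * (f (p i) - ⟪g, Φ (p i)⟫) := by
      simp only [inner_sum, inner_smul_right, mul_sub, Finset.sum_sub_distrib]
    rw [e]
    calc |∑ i, v i * (f (p i) - ⟪g, Φ (p i)⟫)|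
        ≤ ∑ i, |v i * (f (p i) - ⟪g, Φ (p i)⟫)| := Finset.abs_sum_le_sum_abs _ _
      _ ≤ ∑ i, v i * ε := by
          refine Finset.sum_le_sum fun i _ => ?_
          rw [abs_mul, abs_of_nonneg (hv i)]
          exact mul_le_mul_of_nonneg_left (hclose _) (hv i)
      _ = ε := by rw [← Finset.sum_mul, hv1, one_mul]
  have h1 := abs_le.1 (key x w hw hw1)
  have h2 := abs_le.1 (key y u hu hu1)
  have h3 := abs_le.1
    (abs_real_inner_le_norm g ((∑ i, w i • Φ (x i)) - ∑ j, u j • Φ (y j)))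
  rw [inner_sub_right] at h3
  rw [abs_le]
  constructor <;> linarith [h1.1, h1.2, h2.1, h2.2, h3.1, h3.2]
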